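/- (Morrey-type Hölder estimate via Choquet integrals) Let $n\ge2$, $\delta\in(0,n]$, and $p\in(\delta,\infty)$. There is a constant $c=c(\delta,n,p)$ such that for every $u\in C^1(\mathbb{R}^n)$ and all $x\ne y$ in $\mathbb{R}^n$, $\frac{|u(x)-u(y)|}{|x-y|^{1-\delta/p}} \le c\Big(\int_{\mathbb{R}^n}|\nabla u(z)|^{p}\,d\mathcal{H}^{\delta}_\infty\Big)^{1/p}$. -/

import Mathlib

open MeasureTheory Metric Set ENNReal

/-- δ-dimensional Hausdorff content via countable ball coverings. -/
noncomputable def hc (n : ℕ) (δ : ℝ) (E : Set (EuclideanSpace ℝ (Fin n))) : ℝ≥0∞ :=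
  ⨅ (c : ℕ → EuclideanSpace ℝ (Fin n)) (r : ℕ → ℝ) (_ : ∀ i, 0 < r i)
    (_ : E ⊆ ⋃ i, ball (c i) (r i)), ∑' i, ENNReal.ofReal (r i ^ δ)

/-- Choquet integral of a nonnegative function over Ω with respect to `hc n δ`. -/
noncomputable def choquet (n : ℕ) (δ : ℝ) (Ω : Set (EuclideanSpace ℝ (Fin n)))
    (f : EuclideanSpace ℝ (Fin n) → ℝ≥0∞) : ℝ≥0∞ :=
  ∫⁻ t in Ioi (0:ℝ), hc n δ {x | x ∈ Ω ∧ ENNReal.ofReal t < f x}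

/-!
By Chebyshev's inequality for the Choquet integral and the covering bound
`volume E ≤ ω * hc n δ E ^ (n / δ)`, where `ω` is the volume of the unit ball, the Choquet integral
of `‖∇u‖ ^ p` controls the weak `L^q` quasi-norm of `∇u` for `q = p * n / δ > n`. This is all that
Morrey's argument needs: over a ball `B`, the integral of `|u z - u a|` is bounded by integrating
`∇u` along the segments from `a` to `z`, and on each contracted copy of `B` Kolmogorov's inequality
`∫_B ‖f‖ ≤ q / (q - 1) * ‖f‖_{q,∞} * |B| ^ (1 - 1 / q)` applies. Contracting by `t` costs a factor
`t ^ (-n / q)`, which is integrable on `(0, 1]` because `q > n`.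
-/

/-- The weak `L^q` quasi-norm (Lorentz `L^{q,∞}`) `sup_s s μ{‖f‖ > s}^{1/q}` of `f`, the only
information about the gradient that Morrey's argument needs. The exponent `q` is meant to be
positive, and levels `s ≤ 0` contribute `0` to the supremum. -/
noncomputable def weakLpNorm {α ε : Type*} [MeasurableSpace α] [ENorm ε] (f : α → ε) (q : ℝ)
    (μ : Measure α) : ℝ≥0∞ :=
  ⨆ s : ℝ, ENNReal.ofReal s * μ {x | ENNReal.ofReal s < ‖f x‖ₑ} ^ (1 / q)

section WeakLp

variable {α ε F : Type*} [MeasurableSpace α] {μ ν : Measure α} [ENorm ε] [NormedAddCommGroup F]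
  {q : ℝ}

theorem weakLpNorm_mono_measure (hq : 0 ≤ q) (f : α → ε) (h : μ ≤ ν) :
    weakLpNorm f q μ ≤ weakLpNorm f q ν := by
  unfold weakLpNorm
  gcongr

theorem measure_lt_enorm_le_weakLpNorm_div_rpow (hq : 0 < q) (f : α → ε) {s : ℝ} (hs : 0 < s) :
    μ {x | ENNReal.ofReal s < ‖f x‖ₑ} ≤ (weakLpNorm f q μ / ENNReal.ofReal s) ^ q := by
  have h : ENNReal.ofReal s * μ {x | ENNReal.ofReal s < ‖f x‖ₑ} ^ (1 / q) ≤ weakLpNorm f q μ :=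
    le_iSup (fun s : ℝ => ENNReal.ofReal s * μ {x | ENNReal.ofReal s < ‖f x‖ₑ} ^ (1 / q)) s
  rwa [← ENNReal.rpow_inv_le_iff hq, ENNReal.le_div_iff_mul_le (by simp [hs]) (by simp), mul_comm,
    ← one_div]

theorem lintegral_enorm_eq_lintegral_meas_lt {f : α → F} (hf : AEStronglyMeasurable f μ) :
    ∫⁻ x, ‖f x‖ₑ ∂μ = ∫⁻ s in Ioi (0 : ℝ), μ {x | ENNReal.ofReal s < ‖f x‖ₑ} := by
  simp_rw [← ofReal_norm]
  rw [lintegral_eq_lintegral_meas_lt μ (.of_forall fun x => norm_nonneg (f x)) hf.norm.aemeasurable]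
  refine setLIntegral_congr_fun measurableSet_Ioi fun s hs => ?_
  simp only [ENNReal.ofReal_lt_ofReal_iff_of_nonneg (mem_Ioi.1 hs).le]

theorem lintegral_Ioi_ofReal_rpow {a c : ℝ} (ha : a < -1) (hc : 0 < c) :
    ∫⁻ s in Ioi c, ENNReal.ofReal (s ^ a) = ENNReal.ofReal (-c ^ (a + 1) / (a + 1)) := by
  rw [← ofReal_integral_eq_lintegral_ofReal (integrableOn_Ioi_rpow_of_lt ha hc),
    integral_Ioi_rpow_of_lt ha hc]
  filter_upwards [ae_restrict_mem measurableSet_Ioi] with s hs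
  exact Real.rpow_nonneg (hc.trans hs).le _

theorem lintegral_enorm_le_add_weakLpNorm_rpow (hq : 1 < q) {f : α → F}
    (hf : AEStronglyMeasurable f μ) {c : ℝ} (hc : 0 < c) :
    ∫⁻ x, ‖f x‖ₑ ∂μ ≤
      ENNReal.ofReal c * μ univ +
        weakLpNorm f q μ ^ q * ENNReal.ofReal (c ^ (1 - q) / (q - 1)) := by
  have low : ∫⁻ s in Ioc 0 c, μ {x | ENNReal.ofReal s < ‖f x‖ₑ} ≤ ENNReal.ofReal c * μ univ :=
    calc ∫⁻ s in Ioc 0 c, μ {x | ENNReal.ofReal s < ‖f x‖ₑ}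
        ≤ ∫⁻ _ in Ioc 0 c, μ univ := lintegral_mono fun s => measure_mono (subset_univ _)
      _ = ENNReal.ofReal c * μ univ := by
        rw [setLIntegral_const, Real.volume_Ioc, sub_zero, mul_comm]
  have high : ∫⁻ s in Ioi c, μ {x | ENNReal.ofReal s < ‖f x‖ₑ} ≤
      weakLpNorm f q μ ^ q * ENNReal.ofReal (c ^ (1 - q) / (q - 1)) :=
    calc ∫⁻ s in Ioi c, μ {x | ENNReal.ofReal s < ‖f x‖ₑ}
        ≤ ∫⁻ s in Ioi c, weakLpNorm f q μ ^ q * ENNReal.ofReal (s ^ (-q)) := by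
          refine setLIntegral_mono' measurableSet_Ioi fun s hs => ?_
          have hs₀ : 0 < s := hc.trans hs
          refine (measure_lt_enorm_le_weakLpNorm_div_rpow (zero_lt_one.trans hq) f hs₀).trans_eq ?_
          rw [ENNReal.div_rpow_of_nonneg _ _ (zero_le_one.trans hq.le), div_eq_mul_inv,
            ← ENNReal.rpow_neg, ENNReal.ofReal_rpow_of_pos hs₀]
      _ = weakLpNorm f q μ ^ q * ENNReal.ofReal (c ^ (1 - q) / (q - 1)) := by
          rw [lintegral_const_mul _ (by fun_prop), lintegral_Ioi_ofReal_rpow (by linarith) hc,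
            neg_add_eq_sub, ← neg_div_neg_eq, neg_neg, neg_sub]
  rw [lintegral_enorm_eq_lintegral_meas_lt hf, ← Ioc_union_Ioi_eq_Ioi hc.le]
  exact (lintegral_union_le _ _ _).trans (add_le_add low high)

theorem lintegral_enorm_eq_zero_of_weakLpNorm_eq_zero (hq : 0 < q) {f : α → F}
    (hf : AEStronglyMeasurable f μ) (h : weakLpNorm f q μ = 0) : ∫⁻ x, ‖f x‖ₑ ∂μ = 0 := by
  rw [lintegral_enorm_eq_lintegral_meas_lt hf]
  refine (setLIntegral_congr_fun measurableSet_Ioi fun s hs => ?_).trans lintegral_zero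
  refine le_zero_iff.1 ((measure_lt_enorm_le_weakLpNorm_div_rpow hq f hs).trans_eq ?_)
  rw [h, ENNReal.zero_div, ENNReal.zero_rpow_of_pos hq]

/-- Supplies the height at which the two terms of `lintegral_enorm_le_add_weakLpNorm_rpow`
balance. -/
theorem exists_pos_mul_add_rpow_mul_rpow_eq (hq : 1 < q) {K m : ℝ} (hK : 0 < K) (hm : 0 < m) :
    ∃ c, 0 < c ∧
      c * m + K ^ q * (c ^ (1 - q) / (q - 1)) = q / (q - 1) * K * m ^ (1 - 1 / q) := by
  have hq₁ : q - 1 ≠ 0 := (sub_pos.2 hq).ne'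
  have low : K * m ^ (-(1 / q)) * m = K * m ^ (1 - 1 / q) := by
    rw [mul_assoc, ← Real.rpow_add_one hm.ne', neg_add_eq_sub]
  have high : K ^ q * (K * m ^ (-(1 / q))) ^ (1 - q) = K * m ^ (1 - 1 / q) := by
    rw [Real.mul_rpow hK.le (by positivity), ← mul_assoc, ← Real.rpow_add hK,
      ← Real.rpow_mul hm.le, add_sub_cancel, Real.rpow_one]
    congr 2
    field_simp
    ring
  refine ⟨K * m ^ (-(1 / q)), by positivity, ?_⟩
  rw [low, ← mul_div_assoc, high]
  field_simp
  ring

theorem lintegral_enorm_le_weakLpNorm_mul_rpow_measure_univ (hq : 1 < q) {f : α → F}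
    (hf : AEStronglyMeasurable f μ) :
    ∫⁻ x, ‖f x‖ₑ ∂μ ≤
      ENNReal.ofReal (q / (q - 1)) * weakLpNorm f q μ * μ univ ^ (1 - 1 / q) := by
  have hq₀ : 0 < q := zero_lt_one.trans hq
  have hq₁ : 0 < q - 1 := sub_pos.2 hq
  have hθ : 0 < 1 - 1 / q := sub_pos.2 ((div_lt_one hq₀).2 hq)
  have hC : ENNReal.ofReal (q / (q - 1)) ≠ 0 := (ENNReal.ofReal_pos.2 (div_pos hq₀ hq₁)).ne'
  rcases eq_or_ne (μ univ) 0 with hμ | hμ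
  · simp [Measure.measure_univ_eq_zero.1 hμ]
  rcases eq_or_ne (weakLpNorm f q μ) 0 with hN | hN
  · simp [lintegral_enorm_eq_zero_of_weakLpNorm_eq_zero hq₀ hf hN]
  rcases eq_or_ne (μ univ) ⊤ with hμ_top | hμ_top
  · rw [hμ_top, ENNReal.top_rpow_of_pos hθ, ENNReal.mul_top (mul_ne_zero hC hN)]
    exact le_top
  rcases eq_or_ne (weakLpNorm f q μ) ⊤ with hN_top | hN_top
  · rw [hN_top, ENNReal.mul_top hC, ENNReal.top_mul (by simp [hμ, hμ_top])]
    exact le_top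
  have hm := ENNReal.toReal_pos hμ hμ_top
  have hK := ENNReal.toReal_pos hN hN_top
  obtain ⟨c, hc, h_balance⟩ := exists_pos_mul_add_rpow_mul_rpow_eq hq hK hm
  refine (lintegral_enorm_le_add_weakLpNorm_rpow hq hf hc).trans_eq ?_
  rw [← ENNReal.ofReal_toReal hμ_top, ← ENNReal.ofReal_toReal hN_top, ENNReal.ofReal_rpow_of_pos hK,
    ENNReal.ofReal_rpow_of_pos hm, ← ENNReal.ofReal_mul hc.le, ← ENNReal.ofReal_mul (by positivity),
    ← ENNReal.ofReal_add (by positivity) (by positivity), h_balance,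
    ENNReal.ofReal_mul (by positivity), ENNReal.ofReal_mul (by positivity)]

end WeakLp

section Morrey

variable {E F : Type*} [NormedAddCommGroup E] [NormedSpace ℝ E] [NormedAddCommGroup F]
  [NormedSpace ℝ F] {u : E → F}

theorem enorm_sub_le_mul_lintegral_enorm_fderiv_lineMap (hu : ContDiff ℝ 1 u) (a z : E) :
    ‖u z - u a‖ₑ ≤
      edist z a * ∫⁻ t in Ioc (0 : ℝ) 1, ‖fderiv ℝ u (AffineMap.lineMap a z t)‖ₑ := by
  have h_diff : Differentiable ℝ u := hu.differentiable one_ne_zero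
  have h_deriv (t : ℝ) : deriv (fun t : ℝ => u (AffineMap.lineMap a z t)) t =
      fderiv ℝ u (AffineMap.lineMap a z t) (z - a) :=
    ((h_diff _).hasFDerivAt.comp_hasDerivAt t AffineMap.hasDerivAt_lineMap).deriv
  have h_curve : ContDiff ℝ 1 fun t : ℝ => u (AffineMap.lineMap a z t) :=
    hu.comp (ContinuousAffineMap.lineMap (R := ℝ) a z).contDiff
  calc ‖u z - u a‖ₑ
      ≤ ∫⁻ t in Icc (0 : ℝ) 1, ‖deriv (fun t : ℝ => u (AffineMap.lineMap a z t)) t‖ₑ := by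
        simpa using enorm_sub_le_lintegral_deriv_of_contDiffOn_Icc h_curve.contDiffOn zero_le_one
    _ ≤ ∫⁻ t in Ioc (0 : ℝ) 1, edist z a * ‖fderiv ℝ u (AffineMap.lineMap a z t)‖ₑ := by
        rw [setLIntegral_congr Ioc_ae_eq_Icc.symm]
        refine lintegral_mono fun t => ?_
        rw [h_deriv, edist_eq_enorm_sub, mul_comm]
        exact ContinuousLinearMap.le_opENorm _ _
    _ = edist z a * ∫⁻ t in Ioc (0 : ℝ) 1, ‖fderiv ℝ u (AffineMap.lineMap a z t)‖ₑ :=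
        lintegral_const_mul' _ _ (edist_ne_top z a)

theorem lintegral_Ioc_ofReal_rpow_neg {r : ℝ} (hr : r < 1) :
    ∫⁻ t in Ioc (0 : ℝ) 1, ENNReal.ofReal t ^ (-r) = ENNReal.ofReal (1 - r)⁻¹ := by
  have h_int : IntegrableOn (fun t : ℝ => t ^ (-r)) (Ioc 0 1) :=
    (intervalIntegrable_iff_integrableOn_Ioc_of_le zero_le_one).1
      (intervalIntegral.intervalIntegrable_rpow' (by linarith))
  calc ∫⁻ t in Ioc (0 : ℝ) 1, ENNReal.ofReal t ^ (-r)
      = ∫⁻ t in Ioc (0 : ℝ) 1, ENNReal.ofReal (t ^ (-r)) :=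
        setLIntegral_congr_fun measurableSet_Ioc fun t ht => ENNReal.ofReal_rpow_of_pos ht.1
    _ = ENNReal.ofReal (∫ t in (0 : ℝ)..1, t ^ (-r)) := by
        rw [intervalIntegral.integral_of_le zero_le_one, ofReal_integral_eq_lintegral_ofReal h_int]
        filter_upwards [ae_restrict_mem measurableSet_Ioc] with t ht
        exact Real.rpow_nonneg ht.1.le _
    _ = ENNReal.ofReal (1 - r)⁻¹ := by
        rw [integral_rpow (Or.inl (by linarith)), Real.one_rpow, Real.zero_rpow (by linarith),
          sub_zero, one_div, neg_add_eq_sub]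

variable [MeasurableSpace E] [BorelSpace E] [FiniteDimensional ℝ E] (μ : Measure E)
  [μ.IsAddHaarMeasure] {q : ℝ}

theorem addHaar_preimage_lineMap (a : E) {t : ℝ} (ht : 0 < t) (S : Set E) :
    μ ((fun z => AffineMap.lineMap a z t) ⁻¹' S) =
      ENNReal.ofReal t ^ (-Module.finrank ℝ E : ℝ) * μ S := by
  have h_comp : (fun z => AffineMap.lineMap a z t) ⁻¹' S =
      (· + -a) ⁻¹' ((t • ·) ⁻¹' ((· + a) ⁻¹' S)) := by
    ext z
    simp [AffineMap.lineMap_apply_module', sub_eq_add_neg]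
  rw [h_comp, measure_preimage_add_right, Measure.addHaar_preimage_smul μ ht.ne',
    measure_preimage_add_right, ENNReal.ofReal_rpow_of_pos ht, Real.rpow_neg ht.le,
    Real.rpow_natCast, abs_of_pos (by positivity)]

theorem weakLpNorm_comp_lineMap {ε : Type*} [ENorm ε] (hq : 0 < q) (f : E → ε) (a : E) {t : ℝ}
    (ht : 0 < t) :
    weakLpNorm (fun z => f (AffineMap.lineMap a z t)) q μ =
      ENNReal.ofReal t ^ (-(Module.finrank ℝ E / q)) * weakLpNorm f q μ := by
  unfold weakLpNorm
  rw [ENNReal.mul_iSup]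
  refine iSup_congr fun s => ?_
  have h_level : μ {z | ENNReal.ofReal s < ‖f (AffineMap.lineMap a z t)‖ₑ} =
      ENNReal.ofReal t ^ (-Module.finrank ℝ E : ℝ) * μ {x | ENNReal.ofReal s < ‖f x‖ₑ} :=
    addHaar_preimage_lineMap μ a ht {x | ENNReal.ofReal s < ‖f x‖ₑ}
  rw [h_level, ENNReal.mul_rpow_of_nonneg _ _ (by positivity), ← ENNReal.rpow_mul, mul_one_div,
    neg_div, mul_left_comm]

/-- The constant in Morrey's inequality in dimension `d` for gradients in weak `L^q`, `q > d`: the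
first factor comes from Kolmogorov's inequality, the second is `∫₀¹ t ^ (-d / q) dt`. -/
noncomputable def morreyConst (d q : ℝ) : ℝ≥0∞ :=
  ENNReal.ofReal (q / (q - 1)) * ENNReal.ofReal (1 - d / q)⁻¹

theorem morreyConst_ne_top (d q : ℝ) : morreyConst d q ≠ ⊤ :=
  ENNReal.mul_ne_top ENNReal.ofReal_ne_top ENNReal.ofReal_ne_top

theorem setLIntegral_enorm_fderiv_lineMap_le (hu : ContDiff ℝ 1 u) (hq : 1 < q) (B : Set E) (a : E)
    {t : ℝ} (ht : 0 < t) :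
    ∫⁻ z in B, ‖fderiv ℝ u (AffineMap.lineMap a z t)‖ₑ ∂μ ≤
      ENNReal.ofReal (q / (q - 1)) * weakLpNorm (fderiv ℝ u) q μ * μ B ^ (1 - 1 / q) *
        ENNReal.ofReal t ^ (-(Module.finrank ℝ E / q)) := by
  have h_cont : Continuous fun z => fderiv ℝ u (AffineMap.lineMap a z t) := by
    have := hu.continuous_fderiv one_ne_zero
    simp only [AffineMap.lineMap_apply_module']
    fun_prop
  calc ∫⁻ z in B, ‖fderiv ℝ u (AffineMap.lineMap a z t)‖ₑ ∂μ
      ≤ ENNReal.ofReal (q / (q - 1)) *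
          weakLpNorm (fun z => fderiv ℝ u (AffineMap.lineMap a z t)) q (μ.restrict B) *
            μ B ^ (1 - 1 / q) := by
        simpa only [Measure.restrict_apply_univ] using
          lintegral_enorm_le_weakLpNorm_mul_rpow_measure_univ hq
            (h_cont.aestronglyMeasurable (μ := μ.restrict B))
    _ ≤ ENNReal.ofReal (q / (q - 1)) *
          weakLpNorm (fun z => fderiv ℝ u (AffineMap.lineMap a z t)) q μ * μ B ^ (1 - 1 / q) := by
        gcongr
        exact weakLpNorm_mono_measure (by linarith) _ Measure.restrict_le_self
    _ = _ := by
        rw [weakLpNorm_comp_lineMap μ (by linarith) (fderiv ℝ u) a ht]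
        ring

theorem setLIntegral_enorm_sub_le (hu : ContDiff ℝ 1 u) (hq : 1 < q)
    (hdq : Module.finrank ℝ E < q) {B : Set E} (hB : MeasurableSet B) {a : E} {R : ℝ≥0∞}
    (hR : ∀ z ∈ B, edist z a ≤ R) :
    ∫⁻ z in B, ‖u z - u a‖ₑ ∂μ ≤
      R * (morreyConst (Module.finrank ℝ E) q * weakLpNorm (fderiv ℝ u) q μ *
        μ B ^ (1 - 1 / q)) := by
  have h_meas : Measurable fun w : E × ℝ => ‖fderiv ℝ u (AffineMap.lineMap a w.1 w.2)‖ₑ := by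
    have := hu.continuous_fderiv one_ne_zero
    simp only [AffineMap.lineMap_apply_module']
    fun_prop
  calc ∫⁻ z in B, ‖u z - u a‖ₑ ∂μ
      ≤ ∫⁻ z in B, R * (∫⁻ t in Ioc (0 : ℝ) 1, ‖fderiv ℝ u (AffineMap.lineMap a z t)‖ₑ) ∂μ :=
        setLIntegral_mono' hB fun z hz =>
          (enorm_sub_le_mul_lintegral_enorm_fderiv_lineMap hu a z).trans (by gcongr; exact hR z hz)
    _ = R * ∫⁻ t in Ioc (0 : ℝ) 1,
          ∫⁻ z in B, ‖fderiv ℝ u (AffineMap.lineMap a z t)‖ₑ ∂μ := by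
        rw [lintegral_const_mul _ h_meas.lintegral_prod_right',
          lintegral_lintegral_swap h_meas.aemeasurable]
    _ ≤ R * ∫⁻ t in Ioc (0 : ℝ) 1,
          ENNReal.ofReal (q / (q - 1)) * weakLpNorm (fderiv ℝ u) q μ * μ B ^ (1 - 1 / q) *
            ENNReal.ofReal t ^ (-(Module.finrank ℝ E / q)) := by
        gcongr R * ?_
        exact setLIntegral_mono' measurableSet_Ioc fun t ht =>
          setLIntegral_enorm_fderiv_lineMap_le μ hu hq B a ht.1
    _ = _ := by
        rw [lintegral_const_mul _ (by fun_prop),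
          lintegral_Ioc_ofReal_rpow_neg ((div_lt_one (by linarith)).2 hdq), morreyConst]
        ring

theorem measure_ball_mul_enorm_sub_le (hu : ContDiff ℝ 1 u) (hq : 1 < q)
    (hdq : Module.finrank ℝ E < q) (x y : E) :
    μ (ball x (dist x y)) * ‖u x - u y‖ₑ ≤
      3 * edist x y * (morreyConst (Module.finrank ℝ E) q * weakLpNorm (fderiv ℝ u) q μ *
        μ (ball x (dist x y)) ^ (1 - 1 / q)) := by
  set B := ball x (dist x y)
  set A := morreyConst (Module.finrank ℝ E) q * weakLpNorm (fderiv ℝ u) q μ * μ B ^ (1 - 1 / q)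
  have h_mem {z : E} (hz : z ∈ B) : edist z x ≤ edist x y := by
    rw [edist_dist, edist_dist]
    exact ENNReal.ofReal_le_ofReal (mem_ball.1 hz).le
  have h_x : ∫⁻ z in B, ‖u z - u x‖ₑ ∂μ ≤ edist x y * A :=
    setLIntegral_enorm_sub_le μ hu hq hdq measurableSet_ball fun z hz => h_mem hz
  have h_y : ∫⁻ z in B, ‖u z - u y‖ₑ ∂μ ≤ (edist x y + edist x y) * A :=
    setLIntegral_enorm_sub_le μ hu hq hdq measurableSet_ball fun z hz =>
      (edist_triangle z x y).trans (by gcongr; exact h_mem hz)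
  have hu_cont : Continuous u := hu.continuous
  calc μ B * ‖u x - u y‖ₑ
      = ∫⁻ _ in B, ‖u x - u y‖ₑ ∂μ := by rw [setLIntegral_const, mul_comm]
    _ ≤ ∫⁻ z in B, (‖u z - u x‖ₑ + ‖u z - u y‖ₑ) ∂μ := lintegral_mono fun z => by
        simpa only [edist_eq_enorm_sub] using edist_triangle_left (u x) (u y) (u z)
    _ = ∫⁻ z in B, ‖u z - u x‖ₑ ∂μ + ∫⁻ z in B, ‖u z - u y‖ₑ ∂μ :=
        lintegral_add_left (hu_cont.sub continuous_const).enorm.measurable _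
    _ ≤ edist x y * A + (edist x y + edist x y) * A := add_le_add h_x h_y
    _ = 3 * edist x y * A := by ring

theorem addHaar_ball_dist_rpow {x y : E} (hxy : x ≠ y) (s : ℝ) :
    μ (ball x (dist x y)) ^ s =
      edist x y ^ (Module.finrank ℝ E * s) * μ (ball 0 1) ^ s := by
  have hd : 0 < dist x y := dist_pos.2 hxy
  have hω : μ (ball 0 1) ≠ 0 := (measure_ball_pos μ 0 one_pos).ne'
  rw [Measure.addHaar_ball_of_pos μ x hd, ENNReal.ofReal_pow hd.le, ← edist_dist,
    ENNReal.mul_rpow_of_ne_zero (pow_ne_zero _ (edist_pos.2 hxy).ne') hω,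
    ← ENNReal.rpow_natCast_mul]

theorem enorm_sub_le_edist_rpow_mul_weakLpNorm_fderiv (hu : ContDiff ℝ 1 u)
    (hq : Module.finrank ℝ E < q) (x y : E) :
    ‖u x - u y‖ₑ ≤
      3 * morreyConst (Module.finrank ℝ E) q * edist x y ^ (1 - Module.finrank ℝ E / q) *
        (weakLpNorm (fderiv ℝ u) q μ / μ (ball 0 1) ^ (1 / q)) := by
  rcases eq_or_ne x y with rfl | hxy
  · simp
  have : Nontrivial E := ⟨x, y, hxy⟩
  have hq₁ : 1 < q := (Nat.one_le_cast.2 (Module.finrank_pos (R := ℝ) (M := E))).trans_lt hq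
  set V := μ (ball x (dist x y))
  have hV : V ≠ 0 := (measure_ball_pos μ x (dist_pos.2 hxy)).ne'
  have hV_top : V ≠ ⊤ := measure_ball_lt_top.ne
  have h_scaling : edist x y * V ^ (1 - 1 / q) =
      V * (edist x y ^ (1 - Module.finrank ℝ E / q) / μ (ball 0 1) ^ (1 / q)) := by
    rw [sub_eq_add_neg, ENNReal.rpow_add _ _ hV hV_top, ENNReal.rpow_one,
      addHaar_ball_dist_rpow μ hxy, sub_eq_add_neg,
      ENNReal.rpow_add _ _ (edist_pos.2 hxy).ne' (edist_ne_top x y), ENNReal.rpow_one,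
      ENNReal.rpow_neg (μ (ball 0 1)), mul_neg, mul_one_div]
    simp only [div_eq_mul_inv]
    ring
  rw [← ENNReal.mul_le_mul_iff_right hV hV_top]
  refine (measure_ball_mul_enorm_sub_le μ hu hq₁ hq x y).trans_eq ?_
  rw [mul_assoc, mul_left_comm (edist x y), h_scaling]
  simp only [div_eq_mul_inv]
  ring

end Morrey

section HausdorffContent

variable {n : ℕ} {δ : ℝ}

theorem hc_mono {s t : Set (EuclideanSpace ℝ (Fin n))} (h : s ⊆ t) : hc n δ s ≤ hc n δ t := by
  unfold hc
  gcongr with c r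
  exact le_iInf fun ht => iInf_le_of_le (h.trans ht) le_rfl

theorem ofReal_mul_hc_le_choquet (Ω : Set (EuclideanSpace ℝ (Fin n)))
    (f : EuclideanSpace ℝ (Fin n) → ℝ≥0∞) (t : ℝ) :
    ENNReal.ofReal t * hc n δ {x | x ∈ Ω ∧ ENNReal.ofReal t < f x} ≤ choquet n δ Ω f :=
  calc ENNReal.ofReal t * hc n δ {x | x ∈ Ω ∧ ENNReal.ofReal t < f x}
      = ∫⁻ _ in Ioc (0 : ℝ) t, hc n δ {x | x ∈ Ω ∧ ENNReal.ofReal t < f x} := by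
        rw [setLIntegral_const, Real.volume_Ioc, sub_zero, mul_comm]
    _ ≤ ∫⁻ s in Ioc (0 : ℝ) t, hc n δ {x | x ∈ Ω ∧ ENNReal.ofReal s < f x} :=
        setLIntegral_mono' measurableSet_Ioc fun s hs => hc_mono fun x hx =>
          ⟨hx.1, (ENNReal.ofReal_le_ofReal hs.2).trans_lt hx.2⟩
    _ ≤ choquet n δ Ω f := lintegral_mono_set Ioc_subset_Ioi_self

theorem tsum_rpow_le_rpow_tsum {ι : Type*} (a : ι → ℝ≥0∞) {θ : ℝ} (hθ : 1 ≤ θ) :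
    ∑' i, a i ^ θ ≤ (∑' i, a i) ^ θ := by
  have h_split (b : ℝ≥0∞) : b ^ θ = b * b ^ (θ - 1) := by
    nth_rw 2 [← ENNReal.rpow_one b]
    rw [← ENNReal.rpow_add_of_nonneg _ _ zero_le_one (sub_nonneg.2 hθ), add_sub_cancel]
  rw [h_split, ← ENNReal.tsum_mul_right]
  gcongr with i
  rw [h_split]
  gcongr
  exact ENNReal.le_tsum i

theorem volume_le_hc_rpow (hδ : 0 < δ) (hδn : δ ≤ n) (s : Set (EuclideanSpace ℝ (Fin n))) :
    volume s ≤ volume (ball (0 : EuclideanSpace ℝ (Fin n)) 1) * hc n δ s ^ (n / δ) := by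
  set ω := volume (ball (0 : EuclideanSpace ℝ (Fin n)) 1)
  have hω : ω ≠ 0 := (measure_ball_pos volume 0 one_pos).ne'
  have hω_top : ω ≠ ⊤ := measure_ball_lt_top.ne
  have hθ : 0 < n / δ := div_pos (hδ.trans_le hδn) hδ
  have h_cover (c : ℕ → EuclideanSpace ℝ (Fin n)) (r : ℕ → ℝ) (hr : ∀ i, 0 < r i)
      (hs : s ⊆ ⋃ i, ball (c i) (r i)) :
      volume s ≤ (∑' i, ENNReal.ofReal (r i ^ δ)) ^ (n / δ) * ω :=
    calc volume s ≤ ∑' i, volume (ball (c i) (r i)) :=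
          (measure_mono hs).trans (measure_iUnion_le _)
      _ = (∑' i, ENNReal.ofReal (r i ^ δ) ^ (n / δ)) * ω := by
          rw [← ENNReal.tsum_mul_right]
          refine tsum_congr fun i => ?_
          rw [Measure.addHaar_ball_of_pos _ _ (hr i), finrank_euclideanSpace_fin,
            ENNReal.ofReal_rpow_of_nonneg (Real.rpow_nonneg (hr i).le _) hθ.le,
            ← Real.rpow_mul (hr i).le, mul_div_cancel₀ _ hδ.ne', Real.rpow_natCast]
      _ ≤ (∑' i, ENNReal.ofReal (r i ^ δ)) ^ (n / δ) * ω := by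
          gcongr
          exact tsum_rpow_le_rpow_tsum _ ((one_le_div hδ).2 hδn)
  rw [mul_comm, ← ENNReal.div_le_iff hω hω_top, ← ENNReal.rpow_inv_le_iff hθ]
  refine le_iInf fun c => le_iInf fun r => le_iInf fun hr => le_iInf fun hs => ?_
  rw [ENNReal.rpow_inv_le_iff hθ, ENNReal.div_le_iff hω hω_top]
  exact h_cover c r hr hs

theorem weakLpNorm_le_choquet_rpow {ε : Type*} [ENorm ε] {p : ℝ} (hδ : 0 < δ) (hδn : δ ≤ n)
    (hp : 0 < p) (f : EuclideanSpace ℝ (Fin n) → ε) :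
    weakLpNorm f (p * n / δ) volume ≤
      choquet n δ univ (fun z => ‖f z‖ₑ ^ p) ^ (1 / p) *
        volume (ball (0 : EuclideanSpace ℝ (Fin n)) 1) ^ (1 / (p * n / δ)) := by
  have hn : (0 : ℝ) < n := hδ.trans_le hδn
  refine iSup_le fun s => ?_
  rcases le_or_gt s 0 with hs | hs
  · simp [ENNReal.ofReal_of_nonpos hs]
  set A := {x | ENNReal.ofReal s < ‖f x‖ₑ}
  set ω := volume (ball (0 : EuclideanSpace ℝ (Fin n)) 1)
  have h_level : A = {x | x ∈ univ ∧ ENNReal.ofReal (s ^ p) < ‖f x‖ₑ ^ p} := by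
    simp only [mem_univ, true_and, ← ENNReal.ofReal_rpow_of_pos hs, ENNReal.rpow_lt_rpow_iff hp, A]
  have h_choquet : ENNReal.ofReal s ^ p * hc n δ A ≤ choquet n δ univ (fun z => ‖f z‖ₑ ^ p) := by
    rw [h_level, ENNReal.ofReal_rpow_of_pos hs]
    exact ofReal_mul_hc_le_choquet univ _ _
  calc ENNReal.ofReal s * volume A ^ (1 / (p * n / δ))
      ≤ ENNReal.ofReal s * (ω * hc n δ A ^ (n / δ)) ^ (1 / (p * n / δ)) := by
        gcongr
        exact volume_le_hc_rpow hδ hδn A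
    _ = (ENNReal.ofReal s ^ p * hc n δ A) ^ (1 / p) * ω ^ (1 / (p * n / δ)) := by
        rw [ENNReal.mul_rpow_of_nonneg _ _ (by positivity),
          ENNReal.mul_rpow_of_nonneg _ _ (by positivity), ← ENNReal.rpow_mul, ← ENNReal.rpow_mul,
          mul_one_div_cancel hp.ne', ENNReal.rpow_one,
          show n / δ * (1 / (p * n / δ)) = 1 / p by field_simp]
        ring
    _ ≤ choquet n δ univ (fun z => ‖f z‖ₑ ^ p) ^ (1 / p) * ω ^ (1 / (p * n / δ)) := by
        gcongr

end HausdorffContent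

theorem stmt_8_general {n : ℕ} {δ p : ℝ} (hδ : 0 < δ) (hδn : δ ≤ n) (hp : δ < p) {F : Type*}
    [NormedAddCommGroup F] [NormedSpace ℝ F] {u : EuclideanSpace ℝ (Fin n) → F}
    (hu : ContDiff ℝ 1 u) (x y : EuclideanSpace ℝ (Fin n)) :
    ENNReal.ofReal ‖u x - u y‖ ≤
      3 * morreyConst n (p * n / δ) * ENNReal.ofReal (dist x y ^ (1 - δ / p)) *
        choquet n δ univ (fun z => ENNReal.ofReal (‖fderiv ℝ u z‖ ^ p)) ^ (1 / p) := by
  have : (0 : ℝ) < n := hδ.trans_le hδn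
  have hp₀ : 0 < p := hδ.trans hp
  have hq : Module.finrank ℝ (EuclideanSpace ℝ (Fin n)) < p * n / δ := by
    rw [finrank_euclideanSpace_fin, lt_div_iff₀ hδ, mul_comm]
    gcongr
  have h_exponent : 1 - n / (p * n / δ) = 1 - δ / p := by field_simp
  have h_nonneg : 0 ≤ 1 - δ / p := sub_nonneg.2 ((div_le_one hp₀).2 hp.le)
  have h_morrey := enorm_sub_le_edist_rpow_mul_weakLpNorm_fderiv volume hu hq x y
  rw [finrank_euclideanSpace_fin, h_exponent, edist_dist,
    ENNReal.ofReal_rpow_of_nonneg dist_nonneg h_nonneg, ← ofReal_norm] at h_morrey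
  simp only [← ENNReal.ofReal_rpow_of_nonneg (norm_nonneg _) hp₀.le, ofReal_norm] at h_morrey ⊢
  refine h_morrey.trans ?_
  gcongr
  exact ENNReal.div_le_of_le_mul (weakLpNorm_le_choquet_rpow hδ hδn hp₀ (fderiv ℝ u))

theorem stmt_8 (n : ℕ) (hn : 2 ≤ n) (δ p : ℝ) (hδ : 0 < δ) (hδn : δ ≤ n) (hp : δ < p) :
    ∃ c : ℝ≥0∞, c ≠ ⊤ ∧
      ∀ u : EuclideanSpace ℝ (Fin n) → ℝ, ContDiff ℝ 1 u →
        ∀ x y : EuclideanSpace ℝ (Fin n), x ≠ y →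
          ENNReal.ofReal (|u x - u y|) ≤
            c * ENNReal.ofReal (dist x y ^ (1 - δ / p)) *
              (choquet n δ Set.univ (fun z => ENNReal.ofReal (‖fderiv ℝ u z‖ ^ p))) ^ (1 / p) := by
  refine ⟨3 * morreyConst n (p * n / δ),
    ENNReal.mul_ne_top (by simp) (morreyConst_ne_top _ _), fun u hu x y _ => ?_⟩
  exact stmt_8_general hδ hδn hp hu x y
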